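/- arXiv:1704.05792 — 17 statements merged into one kernel-verified Lean document; each statement's English description precedes it below -/
import Mathlib

section
/- Theorem 4.1(c): If a locally finite partially ordered set satisfies Axiom VT and has Property NTC, then it satisfies Axiom D3⁻C. -/
namespace DCompleteStmt

variable {α : Type*}

/-- A vee (d₃⁻-set) `{w; x, y}`: three distinct elements with `w ⋖ x` and `w ⋖ y`. -/
def IsVee [PartialOrder α] (w x y : α) : Prop :=
  x ≠ y ∧ w ⋖ x ∧ w ⋖ y

/-- A diamond `{w; x, y; z}`: four distinct elements with
`w ⋖ x`, `w ⋖ y`, `x ⋖ z`, `y ⋖ z`. -/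
def IsDiamond [PartialOrder α] (w x y z : α) : Prop :=
  x ≠ y ∧ w ⋖ x ∧ w ⋖ y ∧ x ⋖ z ∧ y ⋖ z

/-- A d₃-interval: an interval `[w,z]` that as a set equals a diamond `{w; x, y; z}`. -/
def IsD3Interval [PartialOrder α] (w x y z : α) : Prop :=
  IsDiamond w x y z ∧ Set.Icc w z = {w, x, y, z}

/-- Axiom VT: every vee has a top. -/
def AxVT (α : Type*) [PartialOrder α] : Prop :=
  ∀ w x y : α, IsVee w x y → ∃ z : α, x ⋖ z ∧ y ⋖ z

/-- Axiom NCC: there are no overlapping vees. -/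
def AxNCC (α : Type*) [PartialOrder α] : Prop :=
  ¬ ∃ w w' x y : α, w ≠ w' ∧ x ≠ y ∧ w ⋖ x ∧ w ⋖ y ∧ w' ⋖ x ∧ w' ⋖ y

/-- Property UT: every vee has exactly one top. -/
def PropUT (α : Type*) [PartialOrder α] : Prop :=
  ∀ w x y : α, IsVee w x y → ∃! z : α, x ⋖ z ∧ y ⋖ z

/-- Axiom D3⁻C: every vee has a completing element. -/
def AxD3C (α : Type*) [PartialOrder α] : Prop :=
  ∀ w x y : α, IsVee w x y → ∃ z : α, IsD3Interval w x y z

/-- Property NTC: no element is covered by three pairwise distinct elements. -/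
def PropNTC (α : Type*) [PartialOrder α] : Prop :=
  ¬ ∃ w x y u : α, x ≠ y ∧ x ≠ u ∧ y ≠ u ∧ w ⋖ x ∧ w ⋖ y ∧ w ⋖ u

/-- Property SS: every short interval has cardinality 3 or 4. -/
def PropSS (α : Type*) [PartialOrder α] : Prop :=
  ∀ w u z : α, w ⋖ u → u ⋖ z →
    (Set.Icc w z).ncard = 3 ∨ (Set.Icc w z).ncard = 4

/-- Axiom FT: the top of every diamond covers only the elbows of the diamond. -/
def AxFT (α : Type*) [PartialOrder α] : Prop :=
  ∀ w x y z : α, IsDiamond w x y z → ∀ u : α, u ⋖ z → u = x ∨ u = y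

/-- Axiom D3MF: the maximum of every d₃-interval covers only the elbows. -/
def AxD3MF (α : Type*) [PartialOrder α] : Prop :=
  ∀ w x y z : α, IsD3Interval w x y z → ∀ u : α, u ⋖ z → u = x ∨ u = y

/-- Axiom D3MD: two d₃-intervals with the same maximum element coincide as sets. -/
def AxD3MD (α : Type*) [PartialOrder α] : Prop :=
  ∀ w x y z w' x' y' : α, IsD3Interval w x y z → IsD3Interval w' x' y' z →
    ({w, x, y, z} : Set α) = {w', x', y', z}

/-- Axiom D3⁻CF: every vee has a completing element covering only the elbows. -/
def AxD3CF (α : Type*) [PartialOrder α] : Prop :=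
  ∀ w x y : α, IsVee w x y →
    ∃ z : α, IsD3Interval w x y z ∧ ∀ u : α, u ⋖ z → u = x ∨ u = y

/-- Property DAI: every diamond is an interval. -/
def PropDAI (α : Type*) [PartialOrder α] : Prop :=
  ∀ w x y z : α, IsDiamond w x y z → Set.Icc w z = {w, x, y, z}

/-- Property UC3: every vee has exactly one completing element. -/
def PropUC3 (α : Type*) [PartialOrder α] : Prop :=
  ∀ w x y : α, IsVee w x y → ∃! z : α, IsD3Interval w x y z

/-- Property UPUE: upward propagation of up edges. -/
def PropUPUE (α : Type*) [PartialOrder α] : Prop :=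
  ∀ w x y : α, w ≤ y → w ⋖ x → ¬ x ≤ y → ∃ z : α, y ⋖ z ∧ x ≤ z

/-- A covering chain `a = f 0 ⋖ f 1 ⋖ ⋯ ⋖ f n = b` of length `n`. -/
def IsCovChain [PartialOrder α] (f : ℕ → α) (n : ℕ) (a b : α) : Prop :=
  f 0 = a ∧ f n = b ∧ ∀ i < n, f i ⋖ f (i + 1)

/-- Connectedness via the Hasse diagram (covering graph). -/
def HasseConnected (α : Type*) [PartialOrder α] : Prop :=
  ∀ a b : α, Relation.ReflTransGen (fun u v : α => u ⋖ v ∨ v ⋖ u) a b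

/-- Property UM: a unique maximal element. -/
def PropUM (α : Type*) [PartialOrder α] : Prop :=
  ∃! z : α, IsMax z

/-- Property CLMEE: a unique maximal element, and all covering chains from any
element to it have equal length. -/
def PropCLMEE (α : Type*) [PartialOrder α] : Prop :=
  ∃ z : α, IsMax z ∧ (∀ z' : α, IsMax z' → z' = z) ∧
    ∀ (w : α) (n m : ℕ) (f g : ℕ → α),
      IsCovChain f n w z → IsCovChain g m w z → n = m

/-- The poset is ranked. -/
def IsRanked (α : Type*) [PartialOrder α] : Prop :=
  ∃ ρ : α → ℤ, ∀ x y : α, x ⋖ y → ρ y = ρ x + 1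

/-- Property CLE: whenever `x < y`, all covering chains from `x` to `y`
have equal length. -/
def PropCLE (α : Type*) [PartialOrder α] : Prop :=
  ∀ x y : α, x < y → ∀ (n m : ℕ) (f g : ℕ → α),
    IsCovChain f n x y → IsCovChain g m x y → n = m

/-- Theorem 4.1(c): VT and NTC imply D3⁻C. -/
theorem stmt_1 {α : Type*} [PartialOrder α] (hLF : ∀ a b : α, (Set.Icc a b).Finite)
    (hVT : AxVT α) (hNTC : PropNTC α) : AxD3C α := by
  intro w x y hv
  obtain ⟨hxy, hwx, hwy⟩ := hv
  obtain ⟨z, hxz, hyz⟩ := hVT w x y ⟨hxy, hwx, hwy⟩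
  refine ⟨z, ⟨hxy, hwx, hwy, hxz, hyz⟩, ?_⟩
  ext c
  simp only [Set.mem_Icc, Set.mem_insert_iff, Set.mem_singleton_iff]
  constructor
  · rintro ⟨hwc, hcz⟩
    rcases hwc.eq_or_lt with h | hlt
    · exact Or.inl h.symm
    · -- an element covering `w` below `c`
      have hfin : (Set.Ioc w c).Finite := (hLF w c).subset Set.Ioc_subset_Icc_self
      obtain ⟨a, ha⟩ := hfin.exists_minimal ⟨c, hlt, le_rfl⟩
      have hwa : w ⋖ a := by
        refine ⟨ha.prop.1, fun b hwb hba => ?_⟩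
        exact hba.not_ge (ha.le_of_le ⟨hwb, hba.le.trans ha.prop.2⟩ hba.le)
      have hac : a ≤ c := ha.prop.2
      have hor : a = x ∨ a = y := by
        by_contra hcon
        rw [not_or] at hcon
        exact hNTC ⟨w, x, y, a, hxy, Ne.symm hcon.1, Ne.symm hcon.2, hwx, hwy, hwa⟩
      rcases hor with rfl | rfl
      · rcases hxz.eq_or_eq hac hcz with h | h <;> simp [h]
      · rcases hyz.eq_or_eq hac hcz with h | h <;> simp [h]
  · rintro (rfl | rfl | rfl | rfl)
    · exact ⟨le_rfl, hwx.le.trans hxz.le⟩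
    · exact ⟨hwx.le, hxz.le⟩
    · exact ⟨hwy.le, hyz.le⟩
    · exact ⟨hwx.le.trans hxz.le, le_rfl⟩

end DCompleteStmt
end

section
/- Theorem 4.1(d): If a locally finite partially ordered set satisfies Axiom VT and has Property SS, then it satisfies Axiom D3⁻C. -/
namespace DCompleteStmt

variable {α : Type*}

/-- Theorem 4.1(d): VT and SS imply D3⁻C. -/
theorem stmt_2 {α : Type*} [PartialOrder α] (hLF : ∀ a b : α, (Set.Icc a b).Finite)
    (hVT : AxVT α) (hSS : PropSS α) : AxD3C α := by
  rintro w x y ⟨hxy, hwx, hwy⟩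
  obtain ⟨z, hxz, hyz⟩ := hVT w x y ⟨hxy, hwx, hwy⟩
  refine ⟨z, ⟨hxy, hwx, hwy, hxz, hyz⟩, ?_⟩
  have hwz : w < z := hwx.lt.trans hxz.lt
  have hsub : ({w, x, y, z} : Set α) ⊆ Set.Icc w z := by
    rintro u (rfl | rfl | rfl | rfl)
    · exact ⟨le_rfl, hwz.le⟩
    · exact ⟨hwx.le, hxz.le⟩
    · exact ⟨hwy.le, hyz.le⟩
    · exact ⟨hwz.le, le_rfl⟩
  have hcard : ({w, x, y, z} : Set α).ncard = 4 := by
    rw [Set.ncard_insert_of_notMem, Set.ncard_insert_of_notMem, Set.ncard_pair hyz.lt.ne]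
    · simp [hxy, hxz.lt.ne]
    · simp [hwx.lt.ne, hwy.lt.ne, hwz.ne]
  refine (Set.eq_of_subset_of_ncard_le hsub ?_ (hLF w z)).symm
  rcases hSS w x z hwx hxz with h | h <;> omega

end DCompleteStmt
end

section
/- Theorem 4.1(e): If a locally finite partially ordered set satisfies Axiom VT and Axiom FT, then it satisfies Axiom D3⁻C and Axiom D3MF. -/
namespace DCompleteStmt

variable {α : Type*}

/-- Theorem 4.1(e): VT and FT imply D3⁻C and D3MF. -/
theorem stmt_3 {α : Type*} [PartialOrder α] (hLF : ∀ a b : α, (Set.Icc a b).Finite)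
    (hVT : AxVT α) (hFT : AxFT α) : AxD3C α ∧ AxD3MF α := by
  refine ⟨?_, fun w x y z h => hFT w x y z h.1⟩
  rintro w x y ⟨hne, hwx, hwy⟩
  obtain ⟨z, hxz, hyz⟩ := hVT w x y ⟨hne, hwx, hwy⟩
  have hD : IsDiamond w x y z := ⟨hne, hwx, hwy, hxz, hyz⟩
  refine ⟨z, hD, ?_⟩
  ext u
  simp only [Set.mem_Icc, Set.mem_insert_iff, Set.mem_singleton_iff]
  constructor
  · rintro ⟨hwu, huz⟩
    rcases hwu.eq_or_lt with h | hwu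
    · exact Or.inl h.symm
    rcases huz.eq_or_lt with h | huz
    · exact Or.inr (Or.inr (Or.inr h))
    -- a coatom of `[u, z]` lying above `u`
    have hfin : (Set.Ico u z).Finite := (hLF u z).subset Set.Ico_subset_Icc_self
    obtain ⟨c, huc, hc⟩ := hfin.exists_le_maximal (Set.left_mem_Ico.2 huz)
    have hcz : c ⋖ z := by
      refine ⟨hc.prop.2, fun d hcd hdz => ?_⟩
      exact absurd (hc.le_of_ge ⟨huc.trans hcd.le, hdz⟩ hcd.le) hcd.not_ge
    rcases hFT w x y z hD c hcz with rfl | rfl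
    · exact Or.inr (Or.inl (huc.eq_or_lt.resolve_right (hwx.2 hwu)))
    · exact Or.inr (Or.inr (Or.inl (huc.eq_or_lt.resolve_right (hwy.2 hwu))))
  · rintro (rfl | rfl | rfl | rfl)
    · exact ⟨le_rfl, hwx.le.trans hxz.le⟩
    · exact ⟨hwx.le, hxz.le⟩
    · exact ⟨hwy.le, hyz.le⟩
    · exact ⟨hwx.le.trans hxz.le, le_rfl⟩

end DCompleteStmt
end

section
/- Theorem 4.1(g): If a locally finite partially ordered set satisfies Axiom D3⁻C and Axiom NCC, then it has Property UT, Property DAI, and Property UC3. -/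
namespace DCompleteStmt

variable {α : Type*}

/-- Theorem 4.1(g): D3⁻C and NCC imply UT, DAI, and UC3. -/
theorem stmt_5 {α : Type*} [PartialOrder α] (hLF : ∀ a b : α, (Set.Icc a b).Finite)
    (hD3C : AxD3C α) (hNCC : AxNCC α) : PropUT α ∧ PropDAI α ∧ PropUC3 α := by
  have hu : ∀ x y z z' : α, x ≠ y → x ⋖ z → y ⋖ z → x ⋖ z' → y ⋖ z' → z = z' := by
    intro x y z z' hxy h1 h2 h3 h4
    by_contra hne
    exact hNCC ⟨x, y, z, z', hxy, hne, h1, h3, h2, h4⟩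
  refine ⟨?_, ?_, ?_⟩
  · intro w x y hv
    obtain ⟨z, ⟨hxy, _, _, h1, h2⟩, _⟩ := hD3C w x y hv
    exact ⟨z, ⟨h1, h2⟩, fun z' h => hu x y z' z hxy h.1 h.2 h1 h2⟩
  · rintro w x y z ⟨hxy, hwx, hwy, hxz, hyz⟩
    obtain ⟨z', ⟨_, _, _, h1, h2⟩, hI⟩ := hD3C w x y ⟨hxy, hwx, hwy⟩
    obtain rfl := hu x y z z' hxy hxz hyz h1 h2
    exact hI
  · intro w x y hv
    obtain ⟨z, hz⟩ := hD3C w x y hv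
    refine ⟨z, hz, fun z' h => ?_⟩
    exact hu x y z' z hv.1 h.1.2.2.2.1 h.1.2.2.2.2 hz.1.2.2.2.1 hz.1.2.2.2.2

end DCompleteStmt
end

section
/- Theorem 4.1(h): If a locally finite partially ordered set satisfies Axiom D3⁻C and Axiom D3MD and has Property NTC, then it satisfies Axiom NCC. -/
namespace DCompleteStmt

variable {α : Type*}

/-- Theorem 4.1(h): D3⁻C, D3MD, and NTC imply NCC. -/
theorem stmt_6 {α : Type*} [PartialOrder α] (hLF : ∀ a b : α, (Set.Icc a b).Finite)
    (hD3C : AxD3C α) (hD3MD : AxD3MD α) (hNTC : PropNTC α) : AxNCC α := by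
  classical
  letI : LocallyFiniteOrder α := LocallyFiniteOrder.ofFiniteIcc hLF
  rintro ⟨w, w', x, y, hw, hxy, hwx, hwy, hwx', hwy'⟩
  obtain ⟨z, hz⟩ := hD3C w x y ⟨hxy, hwx, hwy⟩
  have hxz : x ⋖ z := hz.1.2.2.2.1
  have hyz : y ⋖ z := hz.1.2.2.2.2
  have hz' : IsD3Interval w' x y z := by
    refine ⟨⟨hxy, hwx', hwy', hxz, hyz⟩, ?_⟩
    ext c
    simp only [Set.mem_Icc, Set.mem_insert_iff, Set.mem_singleton_iff]
    constructor
    · rintro ⟨h1, h2⟩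
      rcases h1.eq_or_lt with h | h
      · exact Or.inl h.symm
      obtain ⟨d, hd, hdc⟩ := exists_covBy_le_of_lt h
      have hd' : d = x ∨ d = y := by
        by_contra hne
        push Not at hne
        exact hNTC ⟨w', x, y, d, hxy, hne.1.symm, hne.2.symm, hwx', hwy', hd⟩
      rcases hd' with rfl | rfl
      · rcases hxz.eq_or_eq hdc h2 with h | h <;> simp [h]
      · rcases hyz.eq_or_eq hdc h2 with h | h <;> simp [h]
    · rintro (rfl | rfl | rfl | rfl)
      · exact ⟨le_rfl, hwx'.le.trans hxz.le⟩
      · exact ⟨hwx'.le, hxz.le⟩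
      · exact ⟨hwy'.le, hyz.le⟩
      · exact ⟨hwx'.le.trans hxz.le, le_rfl⟩
  have hset := hD3MD w x y z w' x y hz hz'
  have hm : w' ∈ ({w, x, y, z} : Set α) := by rw [hset]; simp
  simp only [Set.mem_insert_iff, Set.mem_singleton_iff] at hm
  rcases hm with h | h | h | h
  · exact hw h.symm
  · exact hwx'.lt.ne h
  · exact hwy'.lt.ne h
  · exact (hwx'.lt.trans hxz.lt).ne h

end DCompleteStmt
end

section
/- Theorem 4.1(i): If a locally finite partially ordered set satisfies Axiom D3MF and Axiom NCC, then it satisfies Axiom D3MD. -/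
namespace DCompleteStmt

variable {α : Type*}

/-- Theorem 4.1(i): D3MF and NCC imply D3MD. -/
theorem stmt_7 {α : Type*} [PartialOrder α] (hLF : ∀ a b : α, (Set.Icc a b).Finite)
    (hD3MF : AxD3MF α) (hNCC : AxNCC α) : AxD3MD α := by
  rintro w x y z w' x' y' h h'
  have hx := hD3MF _ _ _ _ h x' h'.1.2.2.2.1
  have hy := hD3MF _ _ _ _ h y' h'.1.2.2.2.2
  obtain ⟨⟨hne, wx, wy, -, -⟩, -⟩ := h
  obtain ⟨⟨hne', wx', wy', -, -⟩, -⟩ := h'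
  have key : ∀ v : α, v ⋖ x → v ⋖ y → w = v := by
    intro v h1 h2
    by_contra hv
    exact hNCC ⟨w, v, x, y, hv, hne, wx, wy, h1, h2⟩
  rcases hx with rfl | rfl <;> rcases hy with rfl | rfl
  · exact absurd rfl hne'
  · rw [key w' wx' wy']
  · rw [key w' wy' wx', Set.insert_comm y' x' {z}]
  · exact absurd rfl hne'

end DCompleteStmt
end

section
/- Theorem 4.1(l): If a locally finite partially ordered set satisfies Axiom D3⁻CF and Axiom NCC, then it satisfies Axiom D3MF and Axiom D3MD. -/
namespace DCompleteStmt

variable {α : Type*}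

/-- Theorem 4.1(l): D3⁻CF and NCC imply D3MF and D3MD. -/
theorem stmt_9 {α : Type*} [PartialOrder α] (hLF : ∀ a b : α, (Set.Icc a b).Finite)
    (hD3CF : AxD3CF α) (hNCC : AxNCC α) : AxD3MF α ∧ AxD3MD α := by
  have hMF : AxD3MF α := by
    rintro w x y z ⟨⟨hxy, hwx, hwy, hxz, hyz⟩, -⟩ u hu
    obtain ⟨z₀, ⟨⟨-, -, -, hx0, hy0⟩, -⟩, hz0⟩ := hD3CF w x y ⟨hxy, hwx, hwy⟩
    have hz : z = z₀ := by
      by_contra hne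
      exact hNCC ⟨x, y, z, z₀, hxy, hne, hxz, hx0, hyz, hy0⟩
    subst hz
    exact hz0 u hu
  refine ⟨hMF, ?_⟩
  intro w x y z w' x' y' h h'
  have hx' := hMF w x y z h x' h'.1.2.2.2.1
  have hy' := hMF w x y z h y' h'.1.2.2.2.2
  obtain ⟨⟨hxy, hwx, hwy, -, -⟩, -⟩ := h
  obtain ⟨⟨hxy', hwx', hwy', -, -⟩, -⟩ := h'
  have key : w' ⋖ x → w' ⋖ y → w = w' := by
    intro h1 h2
    by_contra hne
    exact hNCC ⟨w, w', x, y, hne, hxy, hwx, hwy, h1, h2⟩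
  rcases hx' with rfl | rfl <;> rcases hy' with rfl | rfl
  · exact absurd rfl hxy'
  · rw [key hwx' hwy']
  · rw [key hwy' hwx', Set.insert_comm y' x']
  · exact absurd rfl hxy'

end DCompleteStmt
end

section
/- Theorem 4.1(m): If a locally finite partially ordered set satisfies Axiom D3⁻CF and Axiom D3MD, then it satisfies Axiom NCC and Axiom D3MF. -/
namespace DCompleteStmt

variable {α : Type*}

/-- In a locally finite poset, every element below `z` lies below some coatom of `[c, z]`. -/
theorem exists_coatom {α : Type*} [PartialOrder α] (hLF : ∀ a b : α, (Set.Icc a b).Finite)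
    {c z : α} (h : c < z) : ∃ d, c ≤ d ∧ d ⋖ z := by
  have hf : (Set.Ico c z).Finite := (hLF c z).subset Set.Ico_subset_Icc_self
  obtain ⟨d, hcd, hd⟩ := hf.exists_le_maximal (Set.left_mem_Ico.2 h)
  refine ⟨d, hcd, hd.prop.2, fun e hde hez => ?_⟩
  exact (hd.le_of_ge ⟨hcd.trans hde.le, hez⟩ hde.le).not_gt hde

/-- Theorem 4.1(m): D3⁻CF and D3MD imply NCC and D3MF. -/
theorem stmt_10 {α : Type*} [PartialOrder α] (hLF : ∀ a b : α, (Set.Icc a b).Finite)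
    (hD3CF : AxD3CF α) (hD3MD : AxD3MD α) : AxNCC α ∧ AxD3MF α := by
  have hNCC : AxNCC α := by
    rintro ⟨w, w', x, y, hw, hxy, hwx, hwy, hwx', hwy'⟩
    obtain ⟨z, hz, hcov⟩ := hD3CF w x y ⟨hxy, hwx, hwy⟩
    obtain ⟨-, -, -, hxz, hyz⟩ := hz.1
    have hz' : IsD3Interval w' x y z := by
      refine ⟨⟨hxy, hwx', hwy', hxz, hyz⟩, ?_⟩
      ext c
      simp only [Set.mem_Icc, Set.mem_insert_iff, Set.mem_singleton_iff]
      constructor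
      · rintro ⟨h1, h2⟩
        rcases h2.eq_or_lt with h | h
        · exact Or.inr (Or.inr (Or.inr h))
        · obtain ⟨d, hcd, hd⟩ := exists_coatom hLF h
          rcases hcov d hd with rfl | rfl
          · rcases hwx'.eq_or_eq h1 hcd with h | h <;> simp [h]
          · rcases hwy'.eq_or_eq h1 hcd with h | h <;> simp [h]
      · rintro (rfl | rfl | rfl | rfl)
        · exact ⟨le_rfl, hwx'.le.trans hxz.le⟩
        · exact ⟨hwx'.le, hxz.le⟩
        · exact ⟨hwy'.le, hyz.le⟩
        · exact ⟨hwx'.le.trans hxz.le, le_rfl⟩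
    have hset := hD3MD _ _ _ _ _ _ _ hz hz'
    have hmem : w' ∈ ({w, x, y, z} : Set α) := by rw [hset]; simp
    simp only [Set.mem_insert_iff, Set.mem_singleton_iff] at hmem
    rcases hmem with h | h | h | h
    · exact hw h.symm
    · exact hwx'.lt.ne h
    · exact hwy'.lt.ne h
    · exact (hwx'.lt.trans hxz.lt).ne h
  refine ⟨hNCC, ?_⟩
  rintro w x y z ⟨⟨hxy, hwx, hwy, hxz, hyz⟩, -⟩ u hu
  obtain ⟨z', ⟨⟨-, -, -, hxz', hyz'⟩, -⟩, hcov⟩ := hD3CF w x y ⟨hxy, hwx, hwy⟩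
  by_cases hzz : z = z'
  · subst hzz
    exact hcov u hu
  · exact absurd ⟨x, y, z, z', hxy, hzz, hxz, hxz', hyz, hyz'⟩ hNCC

end DCompleteStmt
end

section
/- Theorem 4.1(n): If a locally finite partially ordered set satisfies Axioms D3⁻C, D3MF, and NCC, then it satisfies Axiom VT and Axiom FT. -/
namespace DCompleteStmt

variable {α : Type*}

/-- Theorem 4.1(n): D3⁻C, D3MF, and NCC imply VT and FT. -/
theorem stmt_11 {α : Type*} [PartialOrder α] (hLF : ∀ a b : α, (Set.Icc a b).Finite)
    (hD3C : AxD3C α) (hD3MF : AxD3MF α) (hNCC : AxNCC α) : AxVT α ∧ AxFT α := by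
  refine ⟨?_, ?_⟩
  · intro w x y h
    obtain ⟨z, hz, _⟩ := hD3C w x y h
    exact ⟨z, hz.2.2.2.1, hz.2.2.2.2⟩
  · intro w x y z hd u hu
    obtain ⟨hxy, hwx, hwy, hxz, hyz⟩ := hd
    obtain ⟨t, ht⟩ := hD3C w x y ⟨hxy, hwx, hwy⟩
    by_cases htz : z = t
    · subst htz
      exact hD3MF w x y z ht u hu
    · exact absurd ⟨x, y, z, t, hxy, htz, hxz, ht.1.2.2.2.1, hyz, ht.1.2.2.2.2⟩ hNCC

end DCompleteStmt
end

section
/- Theorem 4.1(o): If a locally finite partially ordered set satisfies Axiom VT, then it has Property UPUE: whenever w ≤ y, w ⋖ x, and x ≰ y, there exists z with y ⋖ z and x ≤ z. -/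
namespace DCompleteStmt

variable {α : Type*}

/-- Theorem 4.1(o): VT implies UPUE. -/
theorem stmt_12 {α : Type*} [PartialOrder α] (hLF : ∀ a b : α, (Set.Icc a b).Finite)
    (hVT : AxVT α) : PropUPUE α := by
  intro w x y hwy
  let _ : LocallyFiniteOrder α := LocallyFiniteOrder.ofFiniteIcc hLF
  have h := le_iff_reflTransGen_covBy.1 hwy
  clear hwy
  induction h using Relation.ReflTransGen.head_induction_on generalizing x with
  | refl => exact fun hx _ => ⟨x, hx, le_rfl⟩
  | head hac hcy ih =>
    intro hx hxy
    have hcy' := le_iff_reflTransGen_covBy.2 hcy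
    obtain ⟨u, hxu, hcu⟩ := hVT _ x _ ⟨fun e => hxy (e ▸ hcy'), hx, hac⟩
    obtain ⟨z, hz, huz⟩ := ih u hcu (fun e => hxy (hxu.le.trans e))
    exact ⟨z, hz, hxu.le.trans huz⟩

end DCompleteStmt
end

section
/- Corollary 4.2: A locally finite partially ordered set satisfies Axiom FT if and only if it satisfies Axiom D3MF and has Property DAI. -/
namespace DCompleteStmt

variable {α : Type*}

/-- Corollary 4.2: FT holds iff D3MF and DAI hold. -/
theorem stmt_13 {α : Type*} [PartialOrder α] (hLF : ∀ a b : α, (Set.Icc a b).Finite) :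
    AxFT α ↔ AxD3MF α ∧ PropDAI α := by
  constructor
  · intro h
    refine ⟨fun w x y z hd => h w x y z hd.1, ?_⟩
    intro w x y z hd
    obtain ⟨hxy, hwx, hwy, hxz, hyz⟩ := id hd
    ext c
    simp only [Set.mem_Icc, Set.mem_insert_iff, Set.mem_singleton_iff]
    constructor
    · rintro ⟨hwc, hcz⟩
      rcases hcz.eq_or_lt with rfl | hlt
      · simp
      have hfin : (Set.Ico c z).Finite := (hLF c z).subset Set.Ico_subset_Icc_self
      obtain ⟨u, hu⟩ := hfin.exists_maximal ⟨c, le_refl c, hlt⟩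
      have huz : u ⋖ z := by
        refine ⟨hu.prop.2, fun v huv hvz => ?_⟩
        exact absurd (hu.le_of_ge ⟨hu.prop.1.trans huv.le, hvz⟩ huv.le) huv.not_ge
      have hcu : c ≤ u := hu.prop.1
      rcases h w x y z hd u huz with rfl | rfl
      · rcases hwx.eq_or_eq hwc hcu with rfl | rfl <;> simp
      · rcases hwy.eq_or_eq hwc hcu with rfl | rfl <;> simp
    · rintro (rfl | rfl | rfl | rfl)
      · exact ⟨le_rfl, hwx.le.trans hxz.le⟩
      · exact ⟨hwx.le, hxz.le⟩
      · exact ⟨hwy.le, hyz.le⟩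
      · exact ⟨hwx.le.trans hxz.le, le_rfl⟩
  · rintro ⟨h1, h2⟩ w x y z hd
    exact h1 w x y z ⟨hd, h2 w x y z hd⟩

end DCompleteStmt
end

section
/- Theorem 4.3(a): If a finite connected partially ordered set satisfies Axiom VT, then it has Property UM and Property CLMEE. -/
namespace DCompleteStmt

variable {α : Type*}

theorem covChain_cons [PartialOrder α] {f : ℕ → α} {n : ℕ} {w a b : α} (h : w ⋖ a)
    (hf : IsCovChain f n a b) : ∃ g, IsCovChain g (n + 1) w b := by
  obtain ⟨h0, h1, h2⟩ := hf
  refine ⟨fun k => Nat.casesOn k w f, rfl, h1, ?_⟩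
  intro i hi
  cases i with
  | zero => simpa [h0] using h
  | succ k => exact h2 k (by omega)

theorem covChain_tail [PartialOrder α] {f : ℕ → α} {n : ℕ} {w b : α}
    (hf : IsCovChain f (n + 1) w b) :
    w ⋖ f 1 ∧ IsCovChain (fun k => f (k + 1)) n (f 1) b := by
  obtain ⟨h0, h1, h2⟩ := hf
  refine ⟨?_, rfl, h1, fun i hi => h2 (i + 1) (by omega)⟩
  have := h2 0 (by omega)
  rwa [h0] at this

theorem covChain_key [PartialOrder α] [Finite α] (hVT : AxVT α) (w : α) :
    ∃ (z : α) (n : ℕ), IsMax z ∧ (∃ f, IsCovChain f n w z) ∧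
      ∀ (z' : α) (m : ℕ) (g : ℕ → α), IsMax z' → IsCovChain g m w z' → z' = z ∧ m = n := by
  induction w using (wellFounded_gt (α := α)).induction with
  | _ w ih =>
  by_cases hw : IsMax w
  · refine ⟨w, 0, hw, ⟨fun _ => w, rfl, rfl, by simp⟩, ?_⟩
    intro z' m g hz' hg
    cases m with
    | zero => exact ⟨hg.2.1.symm.trans hg.1, rfl⟩
    | succ m => exact absurd (covChain_tail hg).1.lt hw.not_lt
  · obtain ⟨x, hx⟩ := exists_covBy_of_wellFoundedLT (α := α) hw
    obtain ⟨z, n, hz, ⟨f, hf⟩, hu⟩ := ih x hx.lt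
    refine ⟨z, n + 1, hz, covChain_cons hx hf, ?_⟩
    intro z' m g hz' hg
    cases m with
    | zero => exact absurd (hg.1.symm.trans hg.2.1 ▸ hz') hw
    | succ m =>
      obtain ⟨hy, hgt⟩ := covChain_tail hg
      by_cases hxy : x = g 1
      · rw [← hxy] at hgt
        obtain ⟨h1, h2⟩ := hu z' m _ hz' hgt
        exact ⟨h1, by omega⟩
      · obtain ⟨u, hxu, hyu⟩ := hVT w x (g 1) ⟨hxy, hx, hy⟩
        obtain ⟨t, k, ht, ⟨e, he⟩, -⟩ := ih u (hx.lt.trans hxu.lt)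
        obtain ⟨a, ha⟩ := covChain_cons hxu he
        obtain ⟨b, hb⟩ := covChain_cons hyu he
        obtain ⟨y, l, -, -, hyu'⟩ := ih (g 1) hy.lt
        obtain ⟨p1, p2⟩ := hu _ _ _ ht ha
        obtain ⟨q1, q2⟩ := hyu' _ _ _ ht hb
        obtain ⟨r1, r2⟩ := hyu' _ _ _ hz' hgt
        exact ⟨r1.trans (q1.symm.trans p1), by omega⟩

/-- Theorem 4.3(a): a finite connected VT poset has UM and CLMEE. -/
theorem stmt_14 {α : Type*} [PartialOrder α] [Fintype α] [Nonempty α]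
    (hConn : HasseConnected α) (hVT : AxVT α) : PropUM α ∧ PropCLMEE α := by
  obtain ⟨a0⟩ := ‹Nonempty α›
  obtain ⟨z, n0, hz, ⟨f0, hf0⟩, -⟩ := covChain_key hVT a0
  have hall : ∀ b : α, ∃ n f, IsCovChain f n b z := by
    intro b
    induction hConn a0 b with
    | refl => exact ⟨n0, f0, hf0⟩
    | tail _ hbc ih =>
      obtain ⟨n, f, hf⟩ := ih
      rcases hbc with hbc | hcb
      · obtain ⟨t, k, ht, ⟨e, he⟩, -⟩ := covChain_key hVT _
        obtain ⟨a, ha⟩ := covChain_cons hbc he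
        obtain ⟨_, _, -, -, hu⟩ := covChain_key hVT _
        have h1 := (hu _ _ _ ht ha).1
        have h2 := (hu _ _ _ hz hf).1
        rw [h2, ← h1]
        exact ⟨k, e, he⟩
      · exact ⟨n + 1, covChain_cons hcb hf⟩
  have huniq : ∀ z' : α, IsMax z' → z' = z := by
    intro z' hz'
    obtain ⟨n, f, hf⟩ := hall z'
    obtain ⟨_, _, -, -, hu⟩ := covChain_key hVT z'
    have h1 := (hu _ _ _ hz hf).1
    have h2 := (hu z' 0 (fun _ => z') hz' ⟨rfl, rfl, by simp⟩).1
    exact h2.trans h1.symm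
  refine ⟨⟨z, hz, huniq⟩, z, hz, huniq, ?_⟩
  intro w n m f g hf hg
  obtain ⟨_, _, -, -, hu⟩ := covChain_key hVT w
  exact (hu _ _ _ hz hf).2.trans (hu _ _ _ hz hg).2.symm

end DCompleteStmt
end

section
/- Theorem 4.3(b): If a finite partially ordered set satisfies Axiom VT, then it is ranked and has Property CLE. -/
namespace DCompleteStmt

variable {α : Type*}

/-- `Depth x n`: there is a saturated chain of length `n` from `x` to an element with no cover. -/
inductive Depth {α : Type*} [PartialOrder α] : α → ℕ → Prop
  | base (x : α) : (∀ y, ¬ x ⋖ y) → Depth x 0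
  | step (x y : α) (n : ℕ) : x ⋖ y → Depth y n → Depth x (n + 1)

theorem depth_exists {α : Type*} [PartialOrder α] [Fintype α] (x : α) : ∃ n, Depth x n := by
  induction x using (wellFounded_gt (α := α)).induction with
  | _ x ih =>
    by_cases h : ∃ y, x ⋖ y
    · obtain ⟨y, hy⟩ := h
      obtain ⟨n, hn⟩ := ih y hy.lt
      exact ⟨n + 1, .step x y n hy hn⟩
    · exact ⟨0, .base x (by simpa using h)⟩

theorem depth_unique {α : Type*} [PartialOrder α] [Fintype α] (hVT : AxVT α) (w : α) :
    ∀ n m, Depth w n → Depth w m → n = m := by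
  induction w using (wellFounded_gt (α := α)).induction with
  | _ w ih =>
    intro n m hn hm
    cases hn with
    | base _ h =>
      cases hm with
      | base => rfl
      | step _ y m hy _ => exact absurd hy (h y)
    | step _ x n hx hn =>
      cases hm with
      | base _ h => exact absurd hx (h x)
      | step _ y m hy hm =>
        by_cases hxy : x = y
        · subst hxy
          rw [ih x hx.lt n m hn hm]
        · obtain ⟨z, hxz, hyz⟩ := hVT w x y ⟨hxy, hx, hy⟩
          obtain ⟨k, hk⟩ := depth_exists z
          rw [ih x hx.lt n (k + 1) hn (.step x z k hxz hk),
            ih y hy.lt m (k + 1) hm (.step y z k hyz hk)]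

theorem ranked_of_VT {α : Type*} [PartialOrder α] [Fintype α] (hVT : AxVT α) : IsRanked α := by
  choose d hd using depth_exists (α := α)
  refine ⟨fun x => -(d x : ℤ), fun x y hxy => ?_⟩
  have := depth_unique hVT x (d x) (d y + 1) (hd x) (.step x y _ hxy (hd y))
  simp only [this]
  push_cast
  ring

theorem chain_rank {α : Type*} [PartialOrder α] (ρ : α → ℤ)
    (hρ : ∀ x y : α, x ⋖ y → ρ y = ρ x + 1) (f : ℕ → α) :
    ∀ n : ℕ, (∀ i < n, f i ⋖ f (i + 1)) → ρ (f n) = ρ (f 0) + n := by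
  intro n
  induction n with
  | zero => intro _; simp
  | succ k ih =>
    intro h
    rw [hρ _ _ (h k (by omega)), ih (fun i hi => h i (by omega))]
    push_cast
    ring

/-- Theorem 4.3(b): a finite VT poset is ranked and has CLE. -/
theorem stmt_15 {α : Type*} [PartialOrder α] [Fintype α]
    (hVT : AxVT α) : IsRanked α ∧ PropCLE α := by
  refine ⟨ranked_of_VT hVT, ?_⟩
  obtain ⟨ρ, hρ⟩ := ranked_of_VT hVT
  rintro x y - n m f g ⟨hf0, hfn, hf⟩ ⟨hg0, hgm, hg⟩
  have h1 := chain_rank ρ hρ f n hf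
  have h2 := chain_rank ρ hρ g m hg
  rw [hf0, hfn] at h1
  rw [hg0, hgm] at h2
  omega

end DCompleteStmt
end

section
/- Theorem 4.3(c): If a finite partially ordered set satisfies Axiom VT and has Property NTC, then it has Property SS. -/
namespace DCompleteStmt

variable {α : Type*}

/-- `UpRank x n`: some saturated chain of length `n` goes from `x` to a maximal element. -/
inductive UpRank [PartialOrder α] : α → ℕ → Prop
  | top (x : α) (h : IsMax x) : UpRank x 0
  | step (x y : α) (n : ℕ) (h : x ⋖ y) (hy : UpRank y n) : UpRank x (n + 1)

theorem upRank_exists {α : Type*} [PartialOrder α] [Fintype α] (x : α) :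
    ∃ n, UpRank x n := by
  induction x using (wellFounded_gt (α := α)).induction with
  | _ x ih =>
    by_cases hx : IsMax x
    · exact ⟨0, .top x hx⟩
    · obtain ⟨b, hb⟩ := not_isMax_iff.1 hx
      obtain ⟨y, hy, -⟩ := exists_covBy_le_of_lt hb
      obtain ⟨n, hn⟩ := ih y hy.lt
      exact ⟨n + 1, .step x y n hy hn⟩

theorem upRank_unique {α : Type*} [PartialOrder α] [Fintype α] (hVT : AxVT α) (x : α) :
    ∀ n m, UpRank x n → UpRank x m → n = m := by
  induction x using (wellFounded_gt (α := α)).induction with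
  | _ x ih =>
    intro n m hn hm
    cases hn with
    | top _ h =>
      cases hm with
      | top _ _ => rfl
      | step _ y k hy _ => exact absurd hy.lt h.not_lt
    | step _ y k hy hk =>
      cases hm with
      | top _ h => exact absurd hy.lt h.not_lt
      | step _ y' k' hy' hk' =>
        by_cases e : y = y'
        · subst e
          rw [ih y hy.lt _ _ hk hk']
        · obtain ⟨z, hz, hz'⟩ := hVT x y y' ⟨e, hy, hy'⟩
          obtain ⟨l, hl⟩ := upRank_exists z
          rw [ih y hy.lt _ _ hk (.step y z l hz hl), ih y' hy'.lt _ _ hk' (.step y' z l hz' hl)]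

theorem exists_rank {α : Type*} [PartialOrder α] [Fintype α] (hVT : AxVT α) :
    ∃ r : α → ℕ, (∀ x y, x ⋖ y → r x = r y + 1) ∧ ∀ x y, x < y → r y < r x := by
  choose r hr using upRank_exists (α := α)
  have h1 : ∀ x y, x ⋖ y → r x = r y + 1 := fun x y h =>
    upRank_unique hVT x _ _ (hr x) (.step x y _ h (hr y))
  refine ⟨r, h1, ?_⟩
  intro x
  induction x using (wellFounded_gt (α := α)).induction with
  | _ x ih =>
    intro y hxy
    obtain ⟨v, hv, hvy⟩ := exists_covBy_le_of_lt hxy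
    have := h1 x v hv
    rcases hvy.eq_or_lt with e | e
    · subst e; omega
    · have := ih v hv.lt y e; omega

/-- Theorem 4.3(c): a finite VT poset with NTC has SS. -/
theorem stmt_16 {α : Type*} [PartialOrder α] [Fintype α]
    (hVT : AxVT α) (hNTC : PropNTC α) : PropSS α := by
  intro w u z hwu huz
  obtain ⟨r, h1, h2⟩ := exists_rank hVT
  have key : ∀ v, w < v → v < z → w ⋖ v := by
    intro v hwv hvz
    obtain ⟨v', hv', hle⟩ := exists_covBy_le_of_lt hwv
    rcases hle.eq_or_lt with e | e
    · exact e ▸ hv'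
    · have a := h1 w u hwu
      have b := h1 u z huz
      have c := h1 w v' hv'
      have d := h2 v' v e
      have f := h2 v z hvz
      omega
  have hwz : w ≠ z := (hwu.lt.trans huz.lt).ne
  by_cases hex : ∃ v, w < v ∧ v < z ∧ v ≠ u
  · right
    obtain ⟨v, hwv, hvz, hvu⟩ := hex
    have : Set.Icc w z = {w, u, v, z} := by
      ext t
      simp only [Set.mem_Icc, Set.mem_insert_iff, Set.mem_singleton_iff]
      constructor
      · rintro ⟨ha, hb⟩
        by_contra hc
        push Not at hc
        obtain ⟨c1, c2, c3, c4⟩ := hc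
        exact hNTC ⟨w, t, u, v, c2, c3, hvu.symm,
          key t (lt_of_le_of_ne ha (Ne.symm c1)) (lt_of_le_of_ne hb c4), hwu, key v hwv hvz⟩
      · rintro (rfl | rfl | rfl | rfl)
        · exact ⟨le_rfl, (hwv.trans hvz).le⟩
        · exact ⟨hwu.le, huz.le⟩
        · exact ⟨hwv.le, hvz.le⟩
        · exact ⟨(hwv.trans hvz).le, le_rfl⟩
    rw [this, Set.ncard_insert_of_notMem, Set.ncard_insert_of_notMem, Set.ncard_pair hvz.ne]
    · simp [hvu.symm, huz.ne]
    · simp [hwu.ne, hwv.ne, hwz]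
  · left
    have : Set.Icc w z = {w, u, z} := by
      ext t
      simp only [Set.mem_Icc, Set.mem_insert_iff, Set.mem_singleton_iff]
      constructor
      · rintro ⟨ha, hb⟩
        by_contra hc
        push Not at hc
        obtain ⟨c1, c2, c4⟩ := hc
        exact hex ⟨t, lt_of_le_of_ne ha (Ne.symm c1), lt_of_le_of_ne hb c4, c2⟩
      · rintro (rfl | rfl | rfl)
        · exact ⟨le_rfl, (hwu.lt.trans huz.lt).le⟩
        · exact ⟨hwu.le, huz.le⟩
        · exact ⟨(hwu.lt.trans huz.lt).le, le_rfl⟩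
    rw [this, Set.ncard_insert_of_notMem, Set.ncard_pair huz.ne]
    simp [hwu.ne, hwz]

end DCompleteStmt
end

section
/- Theorem 4.3(d): If a finite partially ordered set satisfies Axiom D3⁻CF, then it has Property NTC. -/
namespace DCompleteStmt

variable {α : Type*}

/-- There are no three distinct elements that pairwise form vees. -/
theorem no_triple {α : Type*} [PartialOrder α] [Fintype α] (h : AxD3CF α) (x : α) :
    ∀ y u a b c : α, IsVee a x y → IsVee b x u → IsVee c y u → False := by
  induction x using (wellFounded_gt (α := α)).induction with
  | _ x ih =>
    intro y u a b c hxy hxu hyu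
    obtain ⟨p, ⟨⟨_, _, _, hxp, hyp⟩, _⟩, hp⟩ := h a x y hxy
    obtain ⟨q, ⟨⟨_, _, _, hxq, huq⟩, _⟩, hq⟩ := h b x u hxu
    obtain ⟨r, ⟨⟨_, _, _, hyr, hur⟩, _⟩, hr⟩ := h c y u hyu
    have h1 := hxy.1
    have h2 := hxu.1
    have h3 := hyu.1
    refine ih p hxp.lt q r x y u ⟨?_, hxp, hxq⟩ ⟨?_, hyp, hyr⟩ ⟨?_, huq, hur⟩
    · rintro rfl
      rcases hp u huq with e | e
      · exact h2 e.symm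
      · exact h3 e.symm
    · rintro rfl
      rcases hp u hur with e | e
      · exact h2 e.symm
      · exact h3 e.symm
    · rintro rfl
      rcases hq y hyr with e | e
      · exact h1 e.symm
      · exact h3 e

/-- Theorem 4.3(d): a finite D3⁻CF poset has NTC. -/
theorem stmt_17 {α : Type*} [PartialOrder α] [Fintype α]
    (hD3CF : AxD3CF α) : PropNTC α := by
  rintro ⟨w, x, y, u, hxy, hxu, hyu, hx, hy, hu⟩
  exact no_triple hD3CF x y u w w w ⟨hxy, hx, hy⟩ ⟨hxu, hx, hu⟩ ⟨hyu, hy, hu⟩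

end DCompleteStmt
end

section
/- Theorem 4.3(e): If a finite partially ordered set satisfies Axiom D3⁻C and Axiom D3MF, then it satisfies Axiom VT and Axiom FT. -/
namespace DCompleteStmt

variable {α : Type*}

theorem no_crown {α : Type*} [PartialOrder α] [Finite α]
    (hC : AxD3C α) (hM : AxD3MF α) (x : α) : ∀ y v w₁ w₂ w₃ : α,
      x ≠ y → x ≠ v → y ≠ v → w₁ ⋖ x → w₁ ⋖ y → w₂ ⋖ x → w₂ ⋖ v → w₃ ⋖ y → w₃ ⋖ v →
      False := by
  induction x using WellFoundedGT.induction with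
  | ind x ih =>
  intro y v w₁ w₂ w₃ hxy hxv hyv h1 h2 h3 h4 h5 h6
  obtain ⟨a, ha⟩ := hC w₁ x y ⟨hxy, h1, h2⟩
  obtain ⟨b, hb⟩ := hC w₂ x v ⟨hxv, h3, h4⟩
  obtain ⟨c, hc⟩ := hC w₃ y v ⟨hyv, h5, h6⟩
  have ma := hM _ _ _ _ ha
  have mb := hM _ _ _ _ hb
  obtain ⟨⟨-, -, -, xa, ya⟩, -⟩ := ha
  obtain ⟨⟨-, -, -, xb, vb⟩, -⟩ := hb
  obtain ⟨⟨-, -, -, yc, vc⟩, -⟩ := hc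
  have hab : a ≠ b := by
    rintro rfl
    rcases mb y ya with h | h
    · exact hxy h.symm
    · exact hyv h
  have hac : a ≠ c := by
    rintro rfl
    rcases ma v vc with h | h
    · exact hxv h.symm
    · exact hyv h.symm
  have hbc : b ≠ c := by
    rintro rfl
    rcases mb y yc with h | h
    · exact hxy h.symm
    · exact hyv h
  exact ih a xa.lt b c x y v hab hac hbc xa xb ya yc vb vc

/-- Theorem 4.3(e): a finite poset with D3⁻C and D3MF satisfies VT and FT. -/
theorem stmt_18 {α : Type*} [PartialOrder α] [Fintype α]
    (hD3C : AxD3C α) (hD3MF : AxD3MF α) : AxVT α ∧ AxFT α := by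
  refine ⟨fun w x y h => ?_, ?_⟩
  · obtain ⟨z, ⟨-, -, -, h1, h2⟩, -⟩ := hD3C w x y h
    exact ⟨z, h1, h2⟩
  · intro w x y z hd
    refine hD3MF w x y z ⟨hd, ?_⟩
    obtain ⟨hxy, wx, wy, xz, yz⟩ := hd
    apply Set.Subset.antisymm
    · rintro e ⟨hwe, hez⟩
      by_contra hne
      simp only [Set.mem_insert_iff, Set.mem_singleton_iff, not_or] at hne
      obtain ⟨n1, n2, n3, n4⟩ := hne
      obtain ⟨v, wv, hve⟩ := exists_covBy_le_of_lt (lt_of_le_of_ne hwe (Ne.symm n1))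
      have hez' := lt_of_le_of_ne hez n4
      have hxv : x ≠ v := by
        rintro rfl
        exact xz.2 (lt_of_le_of_ne hve (Ne.symm n2)) hez'
      have hyv : y ≠ v := by
        rintro rfl
        exact yz.2 (lt_of_le_of_ne hve (Ne.symm n3)) hez'
      exact no_crown hD3C hD3MF x y v w w w hxy hxv hyv wx wy wx wv wy wv
    · have := wx.le
      have := wy.le
      have := xz.le
      have := yz.le
      have hwz : w ≤ z := wx.le.trans xz.le
      rintro e (rfl | rfl | rfl | rfl) <;> constructor <;> first | assumption | exact le_rfl

end DCompleteStmt
end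

section
/- Theorem 4.3(f): If a finite partially ordered set satisfies Axiom D3⁻C and Axiom D3MD, then it satisfies Axiom NCC and has Property NTC and Property UC3. -/
namespace DCompleteStmt

variable {α : Type*}

theorem d3_min_eq [PartialOrder α] {w x y z w' x' y' : α} (hMD : AxD3MD α)
    (h : IsD3Interval w x y z) (h' : IsD3Interval w' x' y' z) : w = w' := by
  have e := hMD _ _ _ _ _ _ _ h h'
  rw [← h.2, ← h'.2] at e
  have hz : w ≤ z := h.1.2.1.le.trans h.1.2.2.2.1.le
  have hz' : w' ≤ z := h'.1.2.1.le.trans h'.1.2.2.2.1.le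
  have h1 : w ∈ Set.Icc w' z := e ▸ (⟨le_rfl, hz⟩ : w ∈ Set.Icc w z)
  have h2 : w' ∈ Set.Icc w z := e.symm ▸ (⟨le_rfl, hz'⟩ : w' ∈ Set.Icc w' z)
  exact le_antisymm h2.1 h1.1

theorem ncc_aux [PartialOrder α] [Finite α] (hC : AxD3C α) (hMD : AxD3MD α) (w : α) :
    ∀ w' x y : α, w ≠ w' → x ≠ y → w ⋖ x → w ⋖ y → w' ⋖ x → w' ⋖ y → False := by
  induction w using (wellFounded_gt (α := α)).induction with
  | _ w ih =>
    intro w' x y hw hxy h1 h2 h3 h4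
    obtain ⟨z, hz⟩ := hC w x y ⟨hxy, h1, h2⟩
    obtain ⟨z', hz'⟩ := hC w' x y ⟨hxy, h3, h4⟩
    have hne : z ≠ z' := by
      rintro rfl
      exact hw (d3_min_eq hMD hz hz')
    exact ih x h1.lt y z z' hxy hne hz.1.2.2.2.1 hz'.1.2.2.2.1 hz.1.2.2.2.2 hz'.1.2.2.2.2

theorem crown_aux [PartialOrder α] [Finite α] (hC : AxD3C α) (hMD : AxD3MD α) (a : α) :
    ∀ b c p q r : α, a ≠ b → a ≠ c → b ≠ c → p ≠ q → p ≠ r → q ≠ r →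
      a ⋖ p → a ⋖ q → b ⋖ q → b ⋖ r → c ⋖ p → c ⋖ r → False := by
  induction a using (wellFounded_gt (α := α)).induction with
  | _ a ih =>
    intro b c p q r hab hac hbc hpq hpr hqr h1 h2 h3 h4 h5 h6
    obtain ⟨ta, ha⟩ := hC a p q ⟨hpq, h1, h2⟩
    obtain ⟨tb, hb⟩ := hC b q r ⟨hqr, h3, h4⟩
    obtain ⟨tc, hc⟩ := hC c p r ⟨hpr, h5, h6⟩
    have nab : ta ≠ tb := by
      rintro rfl
      exact hab (d3_min_eq hMD ha hb)
    have nac : ta ≠ tc := by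
      rintro rfl
      exact hac (d3_min_eq hMD ha hc)
    have nbc : tb ≠ tc := by
      rintro rfl
      exact hbc (d3_min_eq hMD hb hc)
    exact ih p h1.lt q r tc ta tb hpq hpr hqr nac.symm nbc.symm nab
      hc.1.2.2.2.1 ha.1.2.2.2.1 ha.1.2.2.2.2 hb.1.2.2.2.1 hc.1.2.2.2.2 hb.1.2.2.2.2

theorem third_elbow [PartialOrder α] {w x y z u : α} (h : IsD3Interval w x y z)
    (hwu : w ⋖ u) (huz : u ⋖ z) (hx : u ≠ x) (hy : u ≠ y) : False := by
  have hu : u ∈ Set.Icc w z := ⟨hwu.le, huz.le⟩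
  rw [h.2] at hu
  rcases hu with rfl | rfl | rfl | rfl
  · exact hwu.lt.false
  · exact hx rfl
  · exact hy rfl
  · exact huz.lt.false

/-- Theorem 4.3(f): a finite poset with D3⁻C and D3MD satisfies NCC
and has NTC and UC3. -/
theorem stmt_19 {α : Type*} [PartialOrder α] [Fintype α]
    (hD3C : AxD3C α) (hD3MD : AxD3MD α) : AxNCC α ∧ PropNTC α ∧ PropUC3 α := by
  refine ⟨?_, ?_, ?_⟩
  · rintro ⟨w, w', x, y, hw, hxy, h1, h2, h3, h4⟩
    exact ncc_aux hD3C hD3MD w w' x y hw hxy h1 h2 h3 h4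
  · rintro ⟨w, x, y, u, hxy, hxu, hyu, h1, h2, h3⟩
    obtain ⟨p, hp⟩ := hD3C w x y ⟨hxy, h1, h2⟩
    obtain ⟨q, hq⟩ := hD3C w x u ⟨hxu, h1, h3⟩
    obtain ⟨r, hr⟩ := hD3C w y u ⟨hyu, h2, h3⟩
    have hpq : p ≠ q := by
      rintro rfl
      exact third_elbow hp h3 hq.1.2.2.2.2 hxu.symm hyu.symm
    have hpr : p ≠ r := by
      rintro rfl
      exact third_elbow hp h3 hr.1.2.2.2.2 hxu.symm hyu.symm
    have hqr : q ≠ r := by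
      rintro rfl
      exact third_elbow hq h2 hr.1.2.2.2.1 hxy.symm hyu
    exact crown_aux hD3C hD3MD x u y p q r hxu hxy hyu.symm hpq hpr hqr
      hp.1.2.2.2.1 hq.1.2.2.2.1 hq.1.2.2.2.2 hr.1.2.2.2.2 hp.1.2.2.2.2 hr.1.2.2.2.1
  · intro w x y hv
    obtain ⟨z, hz⟩ := hD3C w x y hv
    refine ⟨z, hz, fun z' hz' => ?_⟩
    by_contra hne
    exact ncc_aux hD3C hD3MD x y z' z hv.1 hne hz'.1.2.2.2.1 hz.1.2.2.2.1
      hz'.1.2.2.2.2 hz.1.2.2.2.2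

end DCompleteStmt
end
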